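/- arXiv:2503.05428 — 2 statements merged into one kernel-verified Lean document; each statement's English description precedes it below -/
import Mathlib

section
/- For every μ ∈ ℝ, the determinant of the real 3×3 matrix 4ΩΩᵀ + N²(I − ĝĝᵀ) − μI equals (N² − μ)·(μ² − (4|Ω|² + N²)μ + 4(Ω·ĝ)²N²). In particular, the eigenvalues of the symmetric matrix 4ΩΩᵀ + N²(I − ĝĝᵀ) are N², β₋ and β₊. -/
/-!
With `l = N² − μ`, the matrix is the rank-two perturbation `l I + 4ΩΩᵀ − N² ĝĝᵀ` of a scalar matrix,
so its determinant is `l (l² + l (4|Ω|² − N²|ĝ|²) − 4N² (|Ω|²|ĝ|² − (Ω·ĝ)²))`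
(`det_charMat_general`); setting `|ĝ| = 1` gives the stated factorization.

The quadratic factor has discriminant `(N² + 4|Ω|²)² − 16(Ω·ĝ)²N²`. This is nonnegative: it is a sum
of nonnegative terms when `N² ≤ 0`, and for `N² ≥ 0` Cauchy–Schwarz bounds it below by
`(N² − 4|Ω|²)²` (`discrim_nonneg`). Hence the real square root is genuine and the roots of the
quadratic are exactly `β₋` and `β₊`.
-/

open Matrix

noncomputable section

abbrev V3R : Type := Fin 3 → ℝ

/-- `β₊ = ½(4|Ω|² + N² + √((N² + 4|Ω|²)² − 16(Ω·ĝ)² N²))`. -/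
noncomputable def betaP (Ω g : V3R) (N2 : ℝ) : ℝ :=
  (4 * (Ω ⬝ᵥ Ω) + N2 + Real.sqrt ((N2 + 4 * (Ω ⬝ᵥ Ω)) ^ 2 - 16 * (Ω ⬝ᵥ g) ^ 2 * N2)) / 2

/-- `β₋ = ½(4|Ω|² + N² − √((N² + 4|Ω|²)² − 16(Ω·ĝ)² N²))`. -/
noncomputable def betaM (Ω g : V3R) (N2 : ℝ) : ℝ :=
  (4 * (Ω ⬝ᵥ Ω) + N2 - Real.sqrt ((N2 + 4 * (Ω ⬝ᵥ Ω)) ^ 2 - 16 * (Ω ⬝ᵥ g) ^ 2 * N2)) / 2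

/-- The matrix `4ΩΩᵀ + N²(I − ĝĝᵀ) − μI`. -/
def charMat (Ω g : V3R) (N2 μ : ℝ) : Matrix (Fin 3) (Fin 3) ℝ :=
  (4 : ℝ) • vecMulVec Ω Ω + N2 • ((1 : Matrix (Fin 3) (Fin 3) ℝ) - vecMulVec g g)
    - μ • (1 : Matrix (Fin 3) (Fin 3) ℝ)

theorem det_charMat_general (Ω g : V3R) (N2 μ : ℝ) :
    (charMat Ω g N2 μ).det
      = (N2 - μ) * ((N2 - μ) ^ 2 + (N2 - μ) * (4 * (Ω ⬝ᵥ Ω) - N2 * (g ⬝ᵥ g))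
          - 4 * N2 * ((Ω ⬝ᵥ Ω) * (g ⬝ᵥ g) - (Ω ⬝ᵥ g) ^ 2)) := by
  simp [charMat, Matrix.det_fin_three, vecMulVec_apply, dotProduct, Fin.sum_univ_three]
  ring

theorem sq_dotProduct_le (Ω g : V3R) (hg : g ⬝ᵥ g = 1) : (Ω ⬝ᵥ g) ^ 2 ≤ Ω ⬝ᵥ Ω := by
  have h : (Ω ⬝ᵥ g) ^ 2 ≤ (Ω ⬝ᵥ Ω) * (g ⬝ᵥ g) := by
    simp only [dotProduct, Fin.sum_univ_three]
    -- Lagrange's identity: the difference of the two sides is `|Ω × ĝ|²`.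
    nlinarith [sq_nonneg (Ω 0 * g 1 - Ω 1 * g 0), sq_nonneg (Ω 0 * g 2 - Ω 2 * g 0),
      sq_nonneg (Ω 1 * g 2 - Ω 2 * g 1)]
  rwa [hg, mul_one] at h

theorem discrim_nonneg (Ω g : V3R) (hg : g ⬝ᵥ g = 1) (N2 : ℝ) :
    0 ≤ (N2 + 4 * (Ω ⬝ᵥ Ω)) ^ 2 - 16 * (Ω ⬝ᵥ g) ^ 2 * N2 := by
  have hcs := sq_dotProduct_le Ω g hg
  rcases le_total N2 0 with h | h
  · nlinarith [sq_nonneg (N2 + 4 * (Ω ⬝ᵥ Ω)), mul_nonneg (sq_nonneg (Ω ⬝ᵥ g)) (neg_nonneg.2 h)]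
  · nlinarith [sq_nonneg (N2 - 4 * (Ω ⬝ᵥ Ω)), mul_nonneg (sub_nonneg.2 hcs) h]

/-- For every `μ ∈ ℝ`, `det(4ΩΩᵀ + N²(I − ĝĝᵀ) − μI)
  = (N² − μ)(μ² − (4|Ω|² + N²)μ + 4(Ω·ĝ)²N²)`; in particular the eigenvalues of the symmetric
matrix `4ΩΩᵀ + N²(I − ĝĝᵀ)` are `N²`, `β₋` and `β₊`. -/
theorem statement2 (Ω g : V3R) (hg : g ⬝ᵥ g = 1) (N2 : ℝ) (μ : ℝ) :
    (charMat Ω g N2 μ).det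
        = (N2 - μ) * (μ ^ 2 - (4 * (Ω ⬝ᵥ Ω) + N2) * μ + 4 * (Ω ⬝ᵥ g) ^ 2 * N2) ∧
      ((charMat Ω g N2 μ).det = 0 ↔ μ = N2 ∨ μ = betaM Ω g N2 ∨ μ = betaP Ω g N2) := by
  have hdet : (charMat Ω g N2 μ).det
      = (N2 - μ) * (μ ^ 2 - (4 * (Ω ⬝ᵥ Ω) + N2) * μ + 4 * (Ω ⬝ᵥ g) ^ 2 * N2) := by
    rw [det_charMat_general, hg]
    ring
  have hquad : μ ^ 2 - (4 * (Ω ⬝ᵥ Ω) + N2) * μ + 4 * (Ω ⬝ᵥ g) ^ 2 * N2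
      = (μ - betaM Ω g N2) * (μ - betaP Ω g N2) := by
    have hsq := Real.sq_sqrt (discrim_nonneg Ω g hg N2)
    unfold betaM betaP
    linear_combination hsq / 4
  refine ⟨hdet, ?_⟩
  rw [hdet, hquad, mul_eq_zero, mul_eq_zero, sub_eq_zero, sub_eq_zero, sub_eq_zero,
    eq_comm (a := N2)]
end
end

section
/- Let Ω ∈ ℝ³ be nonzero and a ∈ ℝ³ with a·Ω = 0. For each sign ε ∈ {+1, −1}, set k_ε = a + ε·i·(Ω × a)/|Ω| ∈ ℂ³ and λ_ε = ε·i·|Ω| ∈ ℂ. Then for every x ∈ ℝ³: λ_ε²·(k_ε × x) + 2λ_ε·(Ω × (k_ε × x)) + (Ω·(k_ε × x))·Ω − (Ω·x)·(k_ε × Ω) = 0. (These are the tilt-over modes with eigenvalues ±i|Ω|.) -/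
/-!
The vector `k` is orthogonal to `Ω` and is an eigenvector of `Ω × ·`: since
`Ω × (Ω × a) = -|Ω|² a` for `a ⊥ Ω`, one gets `Ω × k = -λ k`. These two facts alone imply the
identity (`mode_of_eigenvector`), over any commutative ring: they give
`Ω × (k × x) = (Ω·x) k`, `Ω·(k × x) = -λ (k·x)`, `k × Ω = λ k` and
`λ (k × x) = -(Ω × k) × x = (k·x) Ω - (Ω·x) k`, and the four terms cancel.
-/

open Matrix

noncomputable section

abbrev V3C : Type := Fin 3 → ℂ

/-- Embedding of real 3-vectors into complex 3-vectors. -/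
def toC (v : V3R) : V3C := fun i => (v i : ℂ)

/-- The Euclidean norm of a real 3-vector. -/
noncomputable def nrm (v : V3R) : ℝ := Real.sqrt (v ⬝ᵥ v)

/-- An eigenvector `k ⊥ w` of `w × ·` with eigenvalue `-l` satisfies the mode equation. -/
lemma mode_of_eigenvector {R : Type*} [CommRing R] (w k x : Fin 3 → R) (l : R)
    (hd : w ⬝ᵥ k = 0) (he : crossProduct w k = -(l • k)) :
    l ^ 2 • crossProduct k x + (2 * l) • crossProduct w (crossProduct k x)
      + (w ⬝ᵥ crossProduct k x) • w - (w ⬝ᵥ x) • crossProduct k w = 0 := by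
  have h0 := congrFun he 0
  have h1 := congrFun he 1
  have h2 := congrFun he 2
  simp [cross_apply, dotProduct, Fin.sum_univ_three] at hd h0 h1 h2
  -- With `e = w × k + l k`, the left-hand side equals
  -- `l (e × x) - 2 l (w·k) x + (e·x) w + (w·x) e`.
  ext i
  fin_cases i <;> simp [cross_apply, dotProduct, Fin.sum_univ_three, vecHead, vecTail]
  · linear_combination l * (x 2 * h1 - x 1 * h2) - 2 * l * x 0 * hd
      + w 0 * (x 0 * h0 + x 1 * h1 + x 2 * h2) + (w 0 * x 0 + w 1 * x 1 + w 2 * x 2) * h0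
  · linear_combination l * (x 0 * h2 - x 2 * h0) - 2 * l * x 1 * hd
      + w 1 * (x 0 * h0 + x 1 * h1 + x 2 * h2) + (w 0 * x 0 + w 1 * x 1 + w 2 * x 2) * h1
  · linear_combination l * (x 1 * h0 - x 0 * h1) - 2 * l * x 2 * hd
      + w 2 * (x 0 * h0 + x 1 * h1 + x 2 * h2) + (w 0 * x 0 + w 1 * x 1 + w 2 * x 2) * h2

lemma toC_cross (u v : V3R) : toC (crossProduct u v) = crossProduct (toC u) (toC v) := by
  ext i
  fin_cases i <;> simp [toC, cross_apply]

lemma toC_dot (u v : V3R) : ((u ⬝ᵥ v : ℝ) : ℂ) = toC u ⬝ᵥ toC v := by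
  simp [toC, dotProduct]

lemma nrm_sq (v : V3R) : nrm v ^ 2 = v ⬝ᵥ v :=
  Real.sq_sqrt (by simpa using dotProduct_star_self_nonneg v)

lemma nrm_ne_zero {v : V3R} (hv : v ≠ 0) : nrm v ≠ 0 := by
  intro h
  have h2 := nrm_sq v
  rw [h] at h2
  exact hv (dotProduct_self_eq_zero.mp (by simpa using h2.symm))

/-- Tilt-over modes: for `Ω ≠ 0`, `a ⊥ Ω`, `ε = ±1`, set
`k_ε = a + ε i (Ω × a)/|Ω|` and `λ_ε = ε i |Ω|`. Then for every `x ∈ ℝ³`,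
`λ_ε² (k_ε × x) + 2λ_ε (Ω × (k_ε × x)) + (Ω·(k_ε × x)) Ω − (Ω·x)(k_ε × Ω) = 0`,
with cross and dot products extended ℂ-bilinearly. -/
theorem statement6 (Ω a : V3R) (hΩ : Ω ≠ 0) (ha : a ⬝ᵥ Ω = 0)
    (ε : ℝ) (hε : ε = 1 ∨ ε = -1) (x : V3R) :
    let k : V3C := toC a + ((ε : ℂ) * Complex.I / (nrm Ω : ℂ)) • toC (crossProduct Ω a)
    let lam : ℂ := (ε : ℂ) * Complex.I * (nrm Ω : ℂ)
    lam ^ 2 • crossProduct k (toC x)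
        + (2 * lam) • crossProduct (toC Ω) (crossProduct k (toC x))
        + (toC Ω ⬝ᵥ crossProduct k (toC x)) • toC Ω
        - ((Ω ⬝ᵥ x : ℝ) : ℂ) • crossProduct k (toC Ω)
      = 0 := by
  intro k lam
  have hn : (nrm Ω : ℂ) ≠ 0 := by exact_mod_cast nrm_ne_zero hΩ
  have hsq : (nrm Ω : ℂ) ^ 2 = toC Ω ⬝ᵥ toC Ω := by
    rw [← toC_dot, ← nrm_sq]
    push_cast
    rfl
  have hda : toC Ω ⬝ᵥ toC a = 0 := by
    rw [← toC_dot, dotProduct_comm, ha, Complex.ofReal_zero]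
  have hε2 : (ε : ℂ) ^ 2 = 1 := by rcases hε with h | h <;> simp [h]
  -- `Ω × (Ω × a) = -|Ω|² a`, by `a ⊥ Ω`.
  have hcc : crossProduct (toC Ω) (crossProduct (toC Ω) (toC a))
      = -((nrm Ω : ℂ) ^ 2 • toC a) := by
    rw [hsq]
    simp only [dotProduct, Fin.sum_univ_three] at hda ⊢
    ext i
    fin_cases i <;> simp [cross_apply]
    · linear_combination toC Ω 0 * hda
    · linear_combination toC Ω 1 * hda
    · linear_combination toC Ω 2 * hda
  rw [toC_dot]
  apply mode_of_eigenvector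
  · simp only [k, toC_cross, dotProduct_add, dotProduct_smul, hda, dot_self_cross, smul_zero,
      add_zero]
  · simp only [k, lam, toC_cross, map_add, map_smul, hcc]
    ext i
    simp only [Pi.add_apply, Pi.smul_apply, Pi.neg_apply, smul_eq_mul]
    field_simp
    linear_combination crossProduct (toC Ω) (toC a) i * (ε ^ 2 * Complex.I_sq - hε2)
end
end
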